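/- Fix c > 1 and ν > 0, and let values be i.i.d. exponential with rate ζ > 0. Then for every ε > 0 there exists B_0 such that for all B ≥ B_0 and all n ≥ ν·B^c, the ratio of the expected UPGA revenue to the expected value surplus satisfies E[B·V_(B+1)] / E[∑_{i=1}^{B} V_(i)] ≥ (c−1)/c − ε, where V_(j) denotes the j-th largest of the n values. Equivalently, as B → ∞ with n ∈ Ω(B^c), the limit of this ratio is at least (c−1)/c. -/

import Mathlib

open MeasureTheory

/-- The `k`-th largest entry of a vector (`k = 1` is the largest); `0` if `k > n`. -/
noncomputable def kthLargest {n : ℕ} (b : Fin n → ℝ) (k : ℕ) : ℝ :=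
  (List.insertionSort (· ≥ ·) (List.ofFn b)).getD (k - 1) 0

/-- `n` i.i.d. draws from the exponential distribution with rate `ζ`. -/
noncomputable def expPi (ζ : ℝ) (n : ℕ) : Measure (Fin n → ℝ) :=
  Measure.pi fun _ : Fin n =>
    volume.withDensity fun x => ENNReal.ofReal (if 0 ≤ x then ζ * Real.exp (-(ζ * x)) else 0)

/-!
With `p = exp (-ζ t)`, the event `t < V₍ₖ₊₁₎` says that more than `k` of the `n` independent draws
exceed `t`, so its probability is the tail of the binomial law with parameters `n` and `p`. The
atom of that law at `m` integrates over `t > 0` to `1 / (ζ m)`, whatever `n` is (this is Rényi's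
mean spacing `E[V₍ₘ₎ - V₍ₘ₊₁₎]`), whence `E[V₍ₖ₊₁₎] = (Hₙ - Hₖ) / ζ` with `H` the harmonic numbers.
Writing `D = Hₙ - H_B`, the revenue is `B D / ζ` and the surplus `B (D + 1) / ζ`, so the ratio is
exactly `D / (D + 1)`. Since `D + 1 ≥ log (n / B)`, it tends to `1` as soon as `n / B → ∞`.
-/

open Filter ProbabilityTheory Set

section Binomial

variable {ι α : Type*} [Fintype ι]

theorem setOf_filter_univ_eq [DecidableEq ι] (p : α → Prop) [DecidablePred p] (s : Finset ι) :
    {v : ι → α | ({j | p (v j)} : Finset ι) = s} =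
      univ.pi fun j => if j ∈ s then {x | p x} else {x | p x}ᶜ := by
  ext v
  simp only [mem_ofPred_eq, Finset.ext_iff, Finset.mem_filter_univ, mem_univ_pi]
  refine forall_congr' fun j => ?_
  split_ifs with hj <;> simp [hj]

variable [MeasurableSpace α] {μ : Measure α} [IsProbabilityMeasure μ] {p : α → Prop}
  [DecidablePred p]

theorem measurable_card_filter (hp : MeasurableSet {x | p x}) :
    Measurable fun v : ι → α => Finset.card {j | p (v j)} := by
  simp_rw [Finset.card_filter]
  exact Finset.measurable_sum _ fun j _ =>
    Measurable.ite (measurable_pi_apply j hp) measurable_const measurable_const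

theorem measurableSet_setOf_filter_univ_eq (hp : MeasurableSet {x | p x}) (s : Finset ι) :
    MeasurableSet {v : ι → α | ({j | p (v j)} : Finset ι) = s} := by
  classical
  rw [setOf_filter_univ_eq]
  exact MeasurableSet.univ_pi fun j => by split_ifs; exacts [hp, hp.compl]

theorem pi_real_filter_eq (hp : MeasurableSet {x | p x}) (s : Finset ι) :
    (Measure.pi fun _ : ι => μ).real {v | ({j | p (v j)} : Finset ι) = s} =
      μ.real {x | p x} ^ s.card * (1 - μ.real {x | p x}) ^ (Fintype.card ι - s.card) := by
  classical
  have hfactor (j : ι) : (μ (if j ∈ s then {x | p x} else {x | p x}ᶜ)).toReal =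
      if j ∈ s then μ.real {x | p x} else 1 - μ.real {x | p x} := by
    split_ifs
    · rfl
    · exact probReal_compl_eq_one_sub hp
  rw [setOf_filter_univ_eq, measureReal_def, Measure.pi_pi, ENNReal.toReal_prod,
    Finset.prod_congr rfl fun j _ => hfactor j, Finset.prod_ite, Finset.prod_const,
    Finset.prod_const]
  simp [Finset.filter_not, Finset.card_sdiff]

theorem pi_real_card_filter_eq (hp : MeasurableSet {x | p x}) (m : ℕ) :
    (Measure.pi fun _ : ι => μ).real {v | Finset.card {j | p (v j)} = m} =
      (Fintype.card ι).choose m *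
        (μ.real {x | p x} ^ m * (1 - μ.real {x | p x}) ^ (Fintype.card ι - m)) := by
  have hset : {v : ι → α | Finset.card {j | p (v j)} = m} =
      ⋃ s ∈ Finset.powersetCard m Finset.univ, {v | ({j | p (v j)} : Finset ι) = s} := by
    ext v
    simp
  rw [hset, measureReal_biUnion_finset]
  · rw [Finset.sum_congr rfl fun s hs => by
      rw [pi_real_filter_eq hp, (Finset.mem_powersetCard.mp hs).2]]
    simp
  · exact fun s _ s' _ hne => disjoint_left.mpr fun v hv hv' => hne (hv.symm.trans hv')
  · exact fun s _ => measurableSet_setOf_filter_univ_eq hp s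

theorem pi_real_lt_card_filter (hp : MeasurableSet {x | p x}) (k : ℕ) :
    (Measure.pi fun _ : ι => μ).real {v | k < Finset.card {j | p (v j)}} =
      ∑ m ∈ Finset.Ico k (Fintype.card ι), (Fintype.card ι).choose (m + 1) *
        (μ.real {x | p x} ^ (m + 1) *
          (1 - μ.real {x | p x}) ^ (Fintype.card ι - (m + 1))) := by
  have hset : {v : ι → α | k < Finset.card {j | p (v j)}} =
      ⋃ m ∈ Finset.Ico k (Fintype.card ι), {v | Finset.card {j | p (v j)} = m + 1} := by
    ext v
    have hcard := Finset.card_le_univ ({j | p (v j)} : Finset ι)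
    simp only [mem_ofPred_eq, mem_iUnion, Finset.mem_Ico, exists_prop]
    refine ⟨fun hk => ⟨_ - 1, ?_, (Nat.sub_add_cancel (Nat.zero_lt_of_lt hk)).symm⟩, ?_⟩ <;> omega
  rw [hset, measureReal_biUnion_finset]
  · exact Finset.sum_congr rfl fun m _ => pi_real_card_filter_eq hp (m + 1)
  · intro m _ m' _ hne
    exact disjoint_left.mpr fun v hv hv' => hne (Nat.add_right_cancel (hv.symm.trans hv'))
  · exact fun m _ => measurable_card_filter hp (measurableSet_singleton _)

end Binomial

theorem lt_getD_iff_lt_countP {α : Type*} [LinearOrder α] {l : List α}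
    (hl : l.Pairwise (· ≥ ·)) {t d : α} {k : ℕ} (hd : l.length ≤ k → d ≤ t) :
    t < l.getD k d ↔ k < l.countP (t < ·) := by
  induction l generalizing k with
  | nil => simpa using hd
  | cons a l ih =>
    obtain ⟨ha, hl⟩ := List.pairwise_cons.mp hl
    rcases lt_or_ge t a with hta | hat
    · cases k with
      | zero => simp [hta]
      | succ k => simpa [hta] using ih hl (k := k) (by simpa using hd)
    · have hcount : l.countP (t < ·) = 0 := by
        simpa [List.countP_eq_zero] using fun b hb => (ha b hb).trans hat
      cases k with
      | zero => simp [hcount, hat]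
      | succ k => simpa [hcount, hat] using ih hl (k := k) (by simpa using hd)

section kthLargest

variable {n k : ℕ} {v : Fin n → ℝ}

theorem kthLargest_of_lt (hk : n < k) : kthLargest v k = 0 :=
  List.getD_eq_default _ _ (by simpa using Nat.le_sub_one_of_lt hk)

theorem kthLargest_nonneg (hv : ∀ j, 0 ≤ v j) : 0 ≤ kthLargest v k := by
  rw [kthLargest]
  rcases lt_or_ge (k - 1) (List.insertionSort (· ≥ ·) (List.ofFn v)).length with hk | hk
  · rw [List.getD_eq_getElem _ _ hk]
    obtain ⟨j, hj⟩ := List.mem_ofFn.mp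
      ((List.mem_insertionSort (· ≥ ·)).mp (List.getElem_mem hk))
    exact hj ▸ hv j
  · rw [List.getD_eq_default _ _ hk]

theorem lt_kthLargest_add_one_iff {t : ℝ} (ht : n ≤ k → 0 ≤ t) :
    t < kthLargest v (k + 1) ↔ k < Finset.card {j | t < v j} := by
  have hcount : (List.ofFn v).countP (t < ·) = Finset.card {j | t < v j} := by
    rw [← Multiset.coe_countP, ← Fin.univ_val_map, Multiset.countP_map]
    rfl
  rw [kthLargest, Nat.add_sub_cancel,
    lt_getD_iff_lt_countP (List.pairwise_insertionSort _ _) (by simpa using ht),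
    (List.perm_insertionSort _ _).countP_eq, hcount]

theorem measurable_kthLargest_add_one (n k : ℕ) :
    Measurable fun v : Fin n → ℝ => kthLargest v (k + 1) := by
  rcases lt_or_ge k n with hk | hk
  · refine measurable_of_Ioi fun t => ?_
    simp_rw [preimage, mem_Ioi, lt_kthLargest_add_one_iff fun h : n ≤ k => absurd hk h.not_gt]
    exact measurableSet_lt measurable_const (measurable_card_filter measurableSet_Ioi)
  · simp_rw [kthLargest_of_lt (Nat.lt_add_one_of_le hk)]
    exact measurable_const

end kthLargest

theorem integrable_of_integrableOn_measureReal_lt {Ω : Type*} [MeasurableSpace Ω] {μ : Measure Ω}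
    [IsFiniteMeasure μ] {X : Ω → ℝ} (hX : 0 ≤ᵐ[μ] X) (hmeas : AEMeasurable X μ)
    (htail : IntegrableOn (fun t => μ.real {ω | t < X ω}) (Ioi 0)) : Integrable X μ := by
  refine (lintegral_ofReal_ne_top_iff_integrable hmeas.aestronglyMeasurable hX).mp ?_
  rw [lintegral_eq_lintegral_meas_lt μ hX hmeas]
  simpa using htail.lintegral_lt_top.ne

theorem inv_mul_choose_sub_inv_mul_choose (m r : ℕ) :
    ((m + 1) * (m + 1 + r).choose r : ℝ)⁻¹ - ((m + 2) * (m + 2 + r).choose r : ℝ)⁻¹ =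
      ((m + 1) * (m + 1 + (r + 1)).choose (r + 1) : ℝ)⁻¹ := by
  have hchoose : ((m + 2 + r).choose r : ℝ) * (m + 2) =
      (m + 1 + r).choose r * (m + r + 2) := by
    have h := Nat.choose_mul_succ_eq (m + 1 + r) r
    rw [show m + 1 + r + 1 - r = m + 2 by omega, show m + 1 + r + 1 = m + 2 + r by ring] at h
    push_cast [← @Nat.cast_inj ℝ] at h
    linarith
  have hchoose_succ : ((m + 1 + (r + 1)).choose (r + 1) : ℝ) * (r + 1) =
      (m + 1 + r).choose r * (m + r + 2) := by
    have h := Nat.add_one_mul_choose_eq (m + 1 + r) r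
    push_cast [← @Nat.cast_inj ℝ] at h
    rw [← add_assoc]
    linarith
  have hpos : (0 : ℝ) < (m + 1 + r).choose r :=
    Nat.cast_pos.mpr (Nat.choose_pos (Nat.le_add_left _ _))
  rw [← eq_div_iff (by positivity)] at hchoose hchoose_succ
  rw [hchoose, hchoose_succ]
  field_simp
  ring

section Exponential

variable {ζ : ℝ}

theorem expMeasure_real_Ioi (hζ : 0 < ζ) {t : ℝ} (ht : 0 ≤ t) :
    (expMeasure ζ).real (Ioi t) = Real.exp (-(ζ * t)) := by
  have := isProbabilityMeasure_expMeasure hζ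
  rw [← compl_Iic, probReal_compl_eq_one_sub measurableSet_Iic, ← cdf_eq_real,
    cdf_expMeasure_eq hζ, if_pos ht, sub_sub_cancel]

theorem ae_pos_expMeasure (hζ : 0 < ζ) : ∀ᵐ x ∂expMeasure ζ, 0 < x := by
  have := isProbabilityMeasure_expMeasure hζ
  have hIoi := expMeasure_real_Ioi hζ le_rfl
  rw [mul_zero, neg_zero, Real.exp_zero] at hIoi
  exact (prob_compl_eq_zero_iff measurableSet_Ioi).mpr
    ((ENNReal.toReal_eq_one_iff _).mp hIoi)

theorem expPi_eq_pi_expMeasure (ζ : ℝ) (n : ℕ) :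
    expPi ζ n = Measure.pi fun _ : Fin n => expMeasure ζ := by
  refine congrArg Measure.pi (funext fun _ => congrArg volume.withDensity (funext fun x => ?_))
  exact (exponentialPDF_eq ζ x).symm

theorem isProbabilityMeasure_expPi (hζ : 0 < ζ) (n : ℕ) : IsProbabilityMeasure (expPi ζ n) := by
  have := isProbabilityMeasure_expMeasure hζ
  rw [expPi_eq_pi_expMeasure]
  infer_instance

theorem ae_nonneg_expPi (hζ : 0 < ζ) (n : ℕ) : ∀ᵐ v ∂expPi ζ n, ∀ j, 0 ≤ v j := by
  have := isProbabilityMeasure_expMeasure hζ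
  rw [expPi_eq_pi_expMeasure, ae_all_iff]
  exact fun j => (Measure.quasiMeasurePreserving_eval _ j).ae
    ((ae_pos_expMeasure hζ).mono fun x hx => hx.le)

theorem integrableOn_exp_pow_mul_one_sub_exp_pow (hζ : 0 < ζ) (m r : ℕ) :
    IntegrableOn (fun t => Real.exp (-(ζ * t)) ^ (m + 1) * (1 - Real.exp (-(ζ * t))) ^ r)
      (Ioi 0) := by
  induction r generalizing m with
  | zero =>
    refine (exp_neg_integrableOn_Ioi 0 (b := (m + 1) * ζ) (by positivity)).congr_fun
      (fun t _ => ?_) measurableSet_Ioi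
    simp only [pow_zero, mul_one]
    rw [← Real.exp_nat_mul]
    push_cast
    ring_nf
  | succ r ih =>
    refine ((ih m).sub (ih (m + 1))).congr_fun (fun t _ => ?_) measurableSet_Ioi
    simp only [Pi.sub_apply]
    ring

theorem integral_exp_pow_mul_one_sub_exp_pow (hζ : 0 < ζ) (m r : ℕ) :
    ∫ t in Ioi 0, Real.exp (-(ζ * t)) ^ (m + 1) * (1 - Real.exp (-(ζ * t))) ^ r =
      (ζ * (m + 1) * (m + 1 + r).choose r)⁻¹ := by
  induction r generalizing m with
  | zero =>
    have hexp (t : ℝ) : Real.exp (-(ζ * t)) ^ (m + 1) * (1 - Real.exp (-(ζ * t))) ^ 0 =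
        Real.exp (-(ζ * (m + 1)) * t) := by
      rw [pow_zero, mul_one, ← Real.exp_nat_mul]
      push_cast
      ring_nf
    simp_rw [hexp]
    rw [integral_exp_mul_Ioi (neg_neg_of_pos (by positivity))]
    simp [neg_div_neg_eq]
  | succ r ih =>
    have hsplit (t : ℝ) : Real.exp (-(ζ * t)) ^ (m + 1) * (1 - Real.exp (-(ζ * t))) ^ (r + 1) =
        Real.exp (-(ζ * t)) ^ (m + 1) * (1 - Real.exp (-(ζ * t))) ^ r -
          Real.exp (-(ζ * t)) ^ (m + 1 + 1) * (1 - Real.exp (-(ζ * t))) ^ r := by ring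
    simp_rw [hsplit]
    rw [integral_sub (integrableOn_exp_pow_mul_one_sub_exp_pow hζ m r)
      (integrableOn_exp_pow_mul_one_sub_exp_pow hζ (m + 1) r), ih, ih]
    rw [mul_assoc, mul_assoc, mul_assoc, mul_inv, mul_inv ζ, mul_inv ζ, ← mul_sub,
      ← inv_mul_choose_sub_inv_mul_choose]
    push_cast
    ring_nf

theorem integral_choose_mul_exp_pow_mul_one_sub_exp_pow (hζ : 0 < ζ) {m n : ℕ} (hm : m < n) :
    ∫ t in Ioi 0, n.choose (m + 1) *
      (Real.exp (-(ζ * t)) ^ (m + 1) * (1 - Real.exp (-(ζ * t))) ^ (n - (m + 1))) =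
      (ζ * (m + 1))⁻¹ := by
  obtain ⟨r, rfl⟩ := Nat.exists_eq_add_of_le (Nat.succ_le_of_lt hm)
  rw [Nat.add_sub_cancel_left, integral_const_mul, integral_exp_pow_mul_one_sub_exp_pow hζ,
    Nat.choose_symm_add]
  have hpos : (0 : ℝ) < (m + 1 + r).choose r :=
    Nat.cast_pos.mpr (Nat.choose_pos (Nat.le_add_left _ _))
  field_simp

theorem expPi_real_lt_kthLargest (hζ : 0 < ζ) (n k : ℕ) {t : ℝ} (ht : 0 ≤ t) :
    (expPi ζ n).real {v | t < kthLargest v (k + 1)} =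
      ∑ m ∈ Finset.Ico k n, n.choose (m + 1) *
        (Real.exp (-(ζ * t)) ^ (m + 1) * (1 - Real.exp (-(ζ * t))) ^ (n - (m + 1))) := by
  have := isProbabilityMeasure_expMeasure hζ
  simp_rw [lt_kthLargest_add_one_iff fun _ => ht, expPi_eq_pi_expMeasure]
  rw [pi_real_lt_card_filter measurableSet_Ioi, Fintype.card_fin, ← expMeasure_real_Ioi hζ ht]
  rfl

theorem integrable_kthLargest (hζ : 0 < ζ) (n k : ℕ) :
    Integrable (fun v => kthLargest v (k + 1)) (expPi ζ n) := by
  have := isProbabilityMeasure_expPi hζ n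
  refine integrable_of_integrableOn_measureReal_lt
    ((ae_nonneg_expPi hζ n).mono fun v hv => kthLargest_nonneg hv)
    (measurable_kthLargest_add_one n k).aemeasurable ?_
  refine IntegrableOn.congr_fun ?_
    (fun t ht => (expPi_real_lt_kthLargest hζ n k (le_of_lt ht)).symm) measurableSet_Ioi
  exact integrable_finsetSum _ fun m _ =>
    (integrableOn_exp_pow_mul_one_sub_exp_pow hζ m _).const_mul _

theorem integral_kthLargest (hζ : 0 < ζ) {n k : ℕ} (hk : k ≤ n) :
    ∫ v, kthLargest v (k + 1) ∂expPi ζ n = (harmonic n - harmonic k) / ζ := by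
  calc ∫ v, kthLargest v (k + 1) ∂expPi ζ n
      = ∫ t in Ioi 0, (expPi ζ n).real {v | t < kthLargest v (k + 1)} :=
        (integrable_kthLargest hζ n k).integral_eq_integral_meas_lt
          ((ae_nonneg_expPi hζ n).mono fun v hv => kthLargest_nonneg hv)
    _ = ∫ t in Ioi 0, ∑ m ∈ Finset.Ico k n, n.choose (m + 1) *
          (Real.exp (-(ζ * t)) ^ (m + 1) * (1 - Real.exp (-(ζ * t))) ^ (n - (m + 1))) :=
        setIntegral_congr_fun measurableSet_Ioi fun t ht =>
          expPi_real_lt_kthLargest hζ n k (le_of_lt ht)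
    _ = ∑ m ∈ Finset.Ico k n, (ζ * (m + 1))⁻¹ := by
        rw [integral_finsetSum _ fun m _ =>
          (integrableOn_exp_pow_mul_one_sub_exp_pow hζ m _).const_mul _]
        exact Finset.sum_congr rfl fun m hm =>
          integral_choose_mul_exp_pow_mul_one_sub_exp_pow hζ (Finset.mem_Ico.mp hm).2
    _ = (harmonic n - harmonic k) / ζ := by
        simp_rw [mul_inv, ← Finset.mul_sum]
        rw [Finset.sum_Ico_eq_sub _ hk]
        simp only [harmonic, Rat.cast_sum, Rat.cast_inv, Nat.cast_add, Nat.cast_one, Rat.cast_add,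
          Rat.cast_natCast, Rat.cast_one]
        ring

end Exponential

theorem sum_range_harmonic_sub_harmonic (n B : ℕ) :
    ∑ k ∈ Finset.range B, (harmonic n - harmonic k) = B * (harmonic n - harmonic B) + B := by
  induction B with
  | zero => simp
  | succ B ih =>
    rw [Finset.sum_range_succ, ih, harmonic_succ]
    push_cast
    field_simp
    ring

theorem log_div_le_harmonic_sub_harmonic_add_one {B n : ℕ} (hB : 0 < B) (hn : 0 < n) :
    Real.log (n / B) ≤ harmonic n - harmonic B + 1 := by
  have hlog : Real.log n ≤ Real.log (n + 1 : ℕ) := Real.log_le_log (by positivity) (by simp)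
  rw [Real.log_div (by positivity) (by positivity)]
  linarith [log_add_one_le_harmonic n, harmonic_le_one_add_log B]

theorem upga_revenue_ratio_eq {ζ : ℝ} (hζ : 0 < ζ) {B n : ℕ} (hB : 0 < B) (hBn : B ≤ n) :
    (∫ v, (B : ℝ) * kthLargest v (B + 1) ∂expPi ζ n) /
        (∫ v, (∑ i ∈ Finset.range B, kthLargest v (i + 1)) ∂expPi ζ n) =
      (harmonic n - harmonic B) / (harmonic n - harmonic B + 1) := by
  have hsurplus : ∫ v, (∑ i ∈ Finset.range B, kthLargest v (i + 1)) ∂expPi ζ n =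
      B * (harmonic n - harmonic B + 1) / ζ := by
    rw [integral_finsetSum _ fun i _ => integrable_kthLargest hζ n i, Finset.sum_congr rfl
      fun i hi => integral_kthLargest hζ ((Finset.mem_range.mp hi).le.trans hBn), ← Finset.sum_div]
    congr 1
    rw [mul_add, mul_one]
    exact_mod_cast sum_range_harmonic_sub_harmonic n B
  rw [integral_const_mul, integral_kthLargest hζ hBn, hsurplus, ← mul_div_assoc,
    div_div_div_cancel_right₀ hζ.ne', mul_div_mul_left _ _ (by positivity)]

theorem eventually_mul_le_mul_rpow {c ν : ℝ} (hc : 1 < c) (hν : 0 < ν) (K : ℝ) :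
    ∀ᶠ x : ℝ in atTop, K * x ≤ ν * x ^ c := by
  have hlim : Tendsto (fun x : ℝ => ν * x ^ (c - 1)) atTop atTop :=
    (tendsto_rpow_atTop (sub_pos.mpr hc)).const_mul_atTop hν
  filter_upwards [hlim.eventually_ge_atTop K, eventually_gt_atTop 0] with x hx hpos
  calc K * x ≤ ν * x ^ (c - 1) * x := by gcongr
    _ = ν * x ^ c := by rw [mul_assoc, Real.rpow_sub_one hpos.ne', div_mul_cancel₀ _ hpos.ne']

theorem upga_exponential_revenue_ratio_general {ζ ε : ℝ} (hζ : 0 < ζ) (hε : 0 < ε) {B n : ℕ}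
    (hB : 0 < B) (hn : Real.exp (1 / ε) * B ≤ n) :
    1 - ε ≤ (∫ v, (B : ℝ) * kthLargest v (B + 1) ∂expPi ζ n) /
      (∫ v, (∑ i ∈ Finset.range B, kthLargest v (i + 1)) ∂expPi ζ n) := by
  have hBpos : (0 : ℝ) < B := Nat.cast_pos.mpr hB
  have hnpos : (0 : ℝ) < n := lt_of_lt_of_le (by positivity) hn
  have hBn : B ≤ n := by
    have hexp : 1 ≤ Real.exp (1 / ε) := Real.one_le_exp (by positivity)
    exact_mod_cast (le_mul_of_one_le_left hBpos.le hexp).trans hn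
  have hgap : 1 / ε ≤ harmonic n - harmonic B + 1 := calc
    1 / ε ≤ Real.log (n / B) := by
      rwa [Real.le_log_iff_exp_le (by positivity), le_div_iff₀ hBpos]
    _ ≤ harmonic n - harmonic B + 1 :=
      log_div_le_harmonic_sub_harmonic_add_one hB (Nat.cast_pos.mp hnpos)
  have hpos : (0 : ℝ) < harmonic n - harmonic B + 1 := lt_of_lt_of_le (by positivity) hgap
  rw [upga_revenue_ratio_eq hζ hB hBn, le_div_iff₀ hpos]
  linarith [(div_le_iff₀' hε).mp hgap]

/-- Fix `c > 1`, `ν > 0`, and let values be i.i.d. exponential with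
rate `ζ > 0`.  For every `ε > 0` there is `B₀` such that for all `B ≥ B₀` and all
`n ≥ ν ⬝ B ^ c`, the ratio of the expected UPGA revenue `E[B ⬝ V₍B₊₁₎]` to the expected
value surplus `E[∑_{i=1}^{B} V₍ᵢ₎]` is at least `(c − 1) / c − ε`; i.e., as `B → ∞`
with `n ∈ Ω(B ^ c)`, the limit of the ratio is at least `(c − 1) / c`. -/
theorem upga_exponential_revenue_ratio (c ν ζ : ℝ) (hc : 1 < c) (hν : 0 < ν)
    (hζ : 0 < ζ) :
    ∀ ε : ℝ, 0 < ε → ∃ B₀ : ℕ, ∀ B : ℕ, B₀ ≤ B → ∀ n : ℕ, ν * (B : ℝ) ^ c ≤ (n : ℝ) →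
      (c - 1) / c - ε
        ≤ (∫ v, (B : ℝ) * kthLargest v (B + 1) ∂(expPi ζ n))
            / (∫ v, (∑ i ∈ Finset.range B, kthLargest v (i + 1)) ∂(expPi ζ n)) := by
  intro ε hε
  obtain ⟨B₀, hB₀⟩ := eventually_atTop.mp ((eventually_gt_atTop 0).and
    (tendsto_natCast_atTop_atTop.eventually (eventually_mul_le_mul_rpow hc hν (Real.exp (1 / ε)))))
  refine ⟨B₀, fun B hB n hn => le_trans ?_
    (upga_exponential_revenue_ratio_general hζ hε (hB₀ B hB).1 ((hB₀ B hB).2.trans hn))⟩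
  gcongr
  exact div_le_one_of_le₀ (by linarith) (by linarith)
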